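/- Every Corson compact space has the Bishop property (B). -/

import Mathlib

open Set Topology Filter

/-- `f ≺ g`: `f ≠ g` and `f` agrees with `g` on the support of `f` (the closure of
the set where `f` is nonzero). -/
def Prec {K : Type*} [TopologicalSpace K] (f g : C(K, ℝ)) : Prop :=
  f ≠ g ∧ ∀ t ∈ closure {t | f t ≠ 0}, f t = g t

/-- `f ≺_δ g`: `f ≺ g` and `‖f - g‖ ≥ δ`. -/
def PrecDelta {K : Type*} [TopologicalSpace K] [CompactSpace K] (δ : ℝ) (f g : C(K, ℝ)) : Prop :=
  Prec f g ∧ δ ≤ ‖f - g‖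

/-- `F` is a `δ`-`≺`-chain. -/
def IsPrecChain {K : Type*} [TopologicalSpace K] [CompactSpace K] (δ : ℝ)
    (F : Set C(K, ℝ)) : Prop :=
  ∀ f ∈ F, ∀ g ∈ F, f ≠ g → PrecDelta δ f g ∨ PrecDelta δ g f

/-- A compact Hausdorff space has the Bishop property (B) if for every `δ > 0`
every `δ`-`≺`-chain in `C(K)` is countable. -/
def HasBishop (K : Type*) [TopologicalSpace K] [CompactSpace K] [T2Space K] : Prop :=
  ∀ δ : ℝ, 0 < δ → ∀ F : Set C(K, ℝ), IsPrecChain δ F → F.Countable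

section Chains

variable {K : Type*} [TopologicalSpace K]

lemma Prec.eq_of_ne_zero {f g : C(K, ℝ)} (h : Prec f g) {t : K} (ht : f t ≠ 0) : f t = g t :=
  h.2 t (subset_closure ht)

lemma Prec.eq_zero {f g : C(K, ℝ)} (h : Prec f g) {t : K} (ht : g t = 0) : f t = 0 := by
  by_contra hf
  exact hf ((h.eq_of_ne_zero hf).trans ht)

variable [CompactSpace K]

lemma PrecDelta.exists_point {δ : ℝ} (hδ : 0 < δ) {f g : C(K, ℝ)} (h : PrecDelta δ f g) :
    ∃ t, f t = 0 ∧ δ ≤ |g t| := by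
  by_contra! hcon
  refine absurd h.2 (not_le.2 ((ContinuousMap.norm_lt_iff _ hδ).2 fun t => ?_))
  by_cases hf : f t = 0
  · simpa [hf] using hcon t hf
  · simpa [h.1.eq_of_ne_zero hf] using hδ

/-- A nonprincipal ultrafilter on a chain has no pointwise limit in `C(K)`. -/
lemma IsPrecChain.false_of_tendsto {δ : ℝ} (hδ : 0 < δ) {F : Set C(K, ℝ)}
    (hF : IsPrecChain δ F) (p : Ultrafilter C(K, ℝ)) (hFp : F ∈ p)
    (hne : ∀ f : C(K, ℝ), ∀ᶠ g in (p : Filter C(K, ℝ)), g ≠ f) (h : C(K, ℝ))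
    (hlim : ∀ t, Tendsto (fun f : C(K, ℝ) => f t) p (𝓝 (h t))) : False := by
  set L : Set C(K, ℝ) := {f | f ∈ F ∧ ∀ᶠ g in (p : Filter C(K, ℝ)), PrecDelta δ f g}
  set R : Set C(K, ℝ) := {f | f ∈ F ∧ ∀ᶠ g in (p : Filter C(K, ℝ)), PrecDelta δ g f}
  have hLR : L ∪ R ∈ p := by
    filter_upwards [hFp] with f hf
    have : ∀ᶠ g in (p : Filter C(K, ℝ)), PrecDelta δ f g ∨ PrecDelta δ g f := by
      filter_upwards [hFp, hne f] with g hg hgf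
      exact hF f hf g hg hgf.symm
    rcases Ultrafilter.eventually_or.1 this with h1 | h1
    · exact Or.inl ⟨hf, h1⟩
    · exact Or.inr ⟨hf, h1⟩
  rcases Ultrafilter.union_mem_iff.1 hLR with hLp | hRp
  · have : Nonempty L := (p.nonempty_of_mem hLp).to_subtype
    have hcl : ∀ f : L, IsClosed {t : K | δ ≤ |h t| ∧ f.1 t = 0} := fun f =>
      (isClosed_le continuous_const h.continuous.abs).inter
        (isClosed_eq f.1.continuous continuous_const)
    have hdir : Directed (· ⊇ ·) fun f : L => {t : K | δ ≤ |h t| ∧ f.1 t = 0} := by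
      have key : ∀ f g : C(K, ℝ), Prec f g →
          {t : K | δ ≤ |h t| ∧ g t = 0} ⊆ {t : K | δ ≤ |h t| ∧ f t = 0} :=
        fun f g hfg t ht => ⟨ht.1, hfg.eq_zero ht.2⟩
      intro f g
      by_cases hfg : f = g
      · exact ⟨f, subset_rfl, hfg ▸ subset_rfl⟩
      · rcases hF f f.2.1 g g.2.1 (fun hc => hfg (Subtype.ext hc)) with h1 | h1
        · exact ⟨g, key _ _ h1.1, subset_rfl⟩
        · exact ⟨f, subset_rfl, key _ _ h1.1⟩
    have hnonempty : ∀ f : L, {t : K | δ ≤ |h t| ∧ f.1 t = 0}.Nonempty := by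
      rintro ⟨f, hf⟩
      obtain ⟨g, hfg, hg⟩ := (hf.2.and hLp).exists
      obtain ⟨t, ht0, ht⟩ := hfg.exists_point hδ
      refine ⟨t, ?_, ht0⟩
      have : h t = g t := tendsto_nhds_unique (hlim t) <| tendsto_const_nhds.congr' <| by
        filter_upwards [hg.2] with k hk
        exact hk.1.eq_of_ne_zero (abs_pos.1 (hδ.trans_le ht))
      rwa [this]
    obtain ⟨x, hx⟩ := IsCompact.nonempty_iInter_of_directed_nonempty_isCompact_isClosed _
      hdir hnonempty (fun f => (hcl f).isCompact) hcl
    simp only [mem_iInter, mem_ofPred_eq] at hx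
    have h0 : h x = 0 := tendsto_nhds_unique (hlim x) <| tendsto_const_nhds.congr' <| by
      filter_upwards [hLp] with f hf
      exact (hx ⟨f, hf⟩).2.symm
    have := (hx (Classical.arbitrary L)).1
    rw [h0, abs_zero] at this
    linarith
  · have : Nonempty R := (p.nonempty_of_mem hRp).to_subtype
    have hcl : ∀ f : R, IsClosed {t : K | δ ≤ |f.1 t| ∧ h t = 0} := fun f =>
      (isClosed_le continuous_const f.1.continuous.abs).inter
        (isClosed_eq h.continuous continuous_const)
    have hdir : Directed (· ⊇ ·) fun f : R => {t : K | δ ≤ |f.1 t| ∧ h t = 0} := by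
      have key : ∀ f g : C(K, ℝ), Prec f g →
          {t : K | δ ≤ |f t| ∧ h t = 0} ⊆ {t : K | δ ≤ |g t| ∧ h t = 0} :=
        fun f g hfg t ht =>
          ⟨hfg.eq_of_ne_zero (abs_pos.1 (hδ.trans_le ht.1)) ▸ ht.1, ht.2⟩
      intro f g
      by_cases hfg : f = g
      · exact ⟨f, subset_rfl, hfg ▸ subset_rfl⟩
      · rcases hF f f.2.1 g g.2.1 (fun hc => hfg (Subtype.ext hc)) with h1 | h1
        · exact ⟨f, subset_rfl, key _ _ h1.1⟩
        · exact ⟨g, key _ _ h1.1, subset_rfl⟩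
    have hnonempty : ∀ f : R, {t : K | δ ≤ |f.1 t| ∧ h t = 0}.Nonempty := by
      rintro ⟨f, hf⟩
      obtain ⟨g, hgf, hg⟩ := (hf.2.and hRp).exists
      obtain ⟨t, ht0, ht⟩ := hgf.exists_point hδ
      refine ⟨t, ht, ?_⟩
      exact tendsto_nhds_unique (hlim t) <| tendsto_const_nhds.congr' <| by
        filter_upwards [hg.2] with k hk
        exact (hk.1.eq_zero ht0).symm
    obtain ⟨x, hx⟩ := IsCompact.nonempty_iInter_of_directed_nonempty_isCompact_isClosed _
      hdir hnonempty (fun f => (hcl f).isCompact) hcl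
    simp only [mem_iInter, mem_ofPred_eq] at hx
    have h0 : δ ≤ |h x| := ge_of_tendsto (hlim x).abs <| by
      filter_upwards [hRp] with f hf
      exact (hx ⟨f, hf⟩).1
    rw [(hx (Classical.arbitrary R)).2, abs_zero] at h0
    linarith

/-- A chain has no accumulation point in `C(K)` for the topology of pointwise convergence. -/
lemma IsPrecChain.exists_nhds_finite {δ : ℝ} (hδ : 0 < δ) {F : Set C(K, ℝ)}
    (hF : IsPrecChain δ F) (h : C(K, ℝ)) :
    ∃ V ∈ 𝓝 (h : K → ℝ), {f ∈ F | (f : K → ℝ) ∈ V}.Finite := by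
  by_contra! hcon
  have hne : NeBot (comap (fun f : C(K, ℝ) => (f : K → ℝ)) (𝓝 (h : K → ℝ)) ⊓
      (𝓟 F ⊓ cofinite)) := by
    rw [inf_neBot_iff]
    rintro s hs s' hs'
    obtain ⟨V, hV, hVs⟩ := hs
    rw [mem_inf_iff_superset] at hs'
    obtain ⟨a, ha, b, hb, hab⟩ := hs'
    obtain ⟨f, hf, hfb⟩ := ((hcon V hV).sdiff (mem_cofinite.1 hb)).nonempty
    exact ⟨f, hVs hf.2, hab ⟨ha hf.1, not_not.1 hfb⟩⟩
  set p := Ultrafilter.of (comap (fun f : C(K, ℝ) => (f : K → ℝ)) (𝓝 (h : K → ℝ)) ⊓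
      (𝓟 F ⊓ cofinite))
  have hple := Ultrafilter.of_le (comap (fun f : C(K, ℝ) => (f : K → ℝ)) (𝓝 (h : K → ℝ)) ⊓
      (𝓟 F ⊓ cofinite))
  refine hF.false_of_tendsto hδ p
    (hple.trans (inf_le_right.trans inf_le_left) (mem_principal_self F))
    (fun f => hple.trans (inf_le_right.trans inf_le_right) (finite_singleton f).compl_mem_cofinite)
    h ?_
  exact tendsto_pi_nhds.1 (tendsto_comap.mono_left (hple.trans inf_le_left))

end Chains

section Corson

variable {K Γ : Type*} {e : K → Γ → ℝ}

lemma exists_countable_approx (e : K → Γ → ℝ) {n : ℕ} (S : Set (Fin n → K)) {A : Set Γ}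
    (hA : A.Countable) : ∃ D ⊆ S, D.Countable ∧ ∀ x ∈ S, ∀ G : Finset Γ, ↑G ⊆ A → ∀ ε > 0,
      ∃ d ∈ D, ∀ i, ∀ γ ∈ G, |e (d i) γ - e (x i) γ| < ε := by
  have := hA.to_subtype
  let φ : S → Fin n → A → ℝ := fun x i γ => e (x.1 i) γ
  let _ : TopologicalSpace S := TopologicalSpace.induced φ inferInstance
  have hφ : Continuous φ := continuous_induced_dom
  have : SecondCountableTopology S := TopologicalSpace.secondCountableTopology_induced _ _ φ
  obtain ⟨D, hDc, hD⟩ := TopologicalSpace.exists_countable_dense S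
  refine ⟨Subtype.val '' D, by simp, hDc.image _, fun x hx G hG ε hε => ?_⟩
  have hopen : IsOpen (⋂ i : Fin n, ⋂ γ : G,
      {y : S | |φ y i ⟨γ, hG γ.2⟩ - e (x i) γ| < ε}) := by
    refine isOpen_iInter_of_finite fun i => isOpen_iInter_of_finite fun γ => ?_
    exact isOpen_lt (((continuous_apply _).comp ((continuous_apply i).comp hφ)).sub
      continuous_const).abs continuous_const
  obtain ⟨d, hd, hdD⟩ := hD.inter_open_nonempty _ hopen ⟨⟨x, hx⟩, by simp [φ, hε]⟩
  simp only [mem_iInter, mem_ofPred_eq] at hd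
  exact ⟨d, mem_image_of_mem _ hdD, fun i γ hγ => hd i ⟨γ, hγ⟩⟩

/-- For countably many sets of tuples in a subset of a `Σ`-product, some countable set `A` of
coordinates and countable subsets `D j`, supported on `A`, approximate every tuple on `A`. -/
lemma exists_countable_coords (hsupp : ∀ x : K, {γ : Γ | e x γ ≠ 0}.Countable)
    {J : Type*} [Countable J] {n : J → ℕ} (S : ∀ j, Set (Fin (n j) → K)) :
    ∃ (A : Set Γ) (D : ∀ j, Set (Fin (n j) → K)), (∀ j, D j ⊆ S j) ∧ (∀ j, (D j).Countable) ∧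
      (∀ j, ∀ d ∈ D j, ∀ i, ∀ γ ∉ A, e (d i) γ = 0) ∧
      ∀ j, ∀ x ∈ S j, ∀ G : Finset Γ, ↑G ⊆ A → ∀ ε > 0,
        ∃ d ∈ D j, ∀ i, ∀ γ ∈ G, |e (d i) γ - e (x i) γ| < ε := by
  choose D hDS hDc hD using fun (A : {A : Set Γ // A.Countable}) (j : J) =>
    exists_countable_approx e (S j) A.2
  let next : {A : Set Γ // A.Countable} → {A : Set Γ // A.Countable} := fun A =>
    ⟨A.1 ∪ ⋃ j, ⋃ d ∈ D A j, ⋃ i, {γ | e (d i) γ ≠ 0},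
      A.2.union (countable_iUnion fun j => (hDc A j).biUnion fun d _ =>
        countable_iUnion fun i => hsupp (d i))⟩
  let B : ℕ → {A : Set Γ // A.Countable} := fun m => next^[m] ⟨∅, countable_empty⟩
  have hB : ∀ m, B (m + 1) = next (B m) := fun m => Function.iterate_succ_apply' _ _ _
  have hmono : Monotone fun m => (B m).1 := monotone_nat_of_le_succ fun m => by
    rw [hB]; exact subset_union_left
  refine ⟨⋃ m, (B m).1, fun j => ⋃ m, D (B m) j, fun j => iUnion_subset fun m => hDS _ _,
    fun j => countable_iUnion fun m => hDc _ _, ?_, ?_⟩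
  · intro j d hd i γ hγ
    obtain ⟨m, hm⟩ := mem_iUnion.1 hd
    by_contra hne
    refine hγ (mem_iUnion.2 ⟨m + 1, ?_⟩)
    rw [hB]
    refine Or.inr ?_
    simp only [mem_iUnion]
    exact ⟨j, d, hm, i, hne⟩
  · intro j x hx G hG ε hε
    obtain ⟨m, hm⟩ := hmono.directed_le.exists_mem_subset_of_finset_subset_biUnion hG
    obtain ⟨d, hd, hd'⟩ := hD (B m) j x hx G hm ε hε
    exact ⟨d, mem_iUnion.2 ⟨m, hd⟩, hd'⟩

end Corson

/-- A set of continuous functions on a Corson compact space is countable as soon as it is locally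
countable in `C(K)` for the topology of pointwise convergence. -/
lemma countable_of_forall_exists_nhds {K Γ : Type*} [TopologicalSpace K] [CompactSpace K]
    {e : K → Γ → ℝ} (he : IsEmbedding e) (hsupp : ∀ x : K, {γ : Γ | e x γ ≠ 0}.Countable)
    {F : Set C(K, ℝ)}
    (hF : ∀ h : C(K, ℝ), ∃ V ∈ 𝓝 (h : K → ℝ), {f ∈ F | (f : K → ℝ) ∈ V}.Countable) :
    F.Countable := by
  classical
  let box : ∀ j : Σ n : ℕ, Fin n → ℚ × ℚ, (Fin j.1 → K) → Set C(K, ℝ) := fun j x =>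
    {f ∈ F | ∀ i, f (x i) ∈ Ioo ((j.2 i).1 : ℝ) (j.2 i).2}
  obtain ⟨A, D, hDS, hDc, hDA, hD⟩ := exists_countable_coords hsupp
    (J := Σ n : ℕ, Fin n → ℚ × ℚ) (n := fun j => j.1) (fun j => {x | (box j x).Countable})
  have hmem : ∀ j, ∀ x, (box j x).Countable →
      (fun i => A.indicator (e (x i))) ∈ closure ((fun d i => e (d i)) '' D j) := by
    intro j x hx
    choose d hdD hd using fun q : Finset Γ × ℕ =>
      hD j x hx {γ ∈ q.1 | γ ∈ A} (by intro γ; simp) (1 / ((q.2 : ℝ) + 1)) (by positivity)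
    refine mem_closure_of_tendsto (b := atTop) (f := fun q i => e (d q i)) ?_
      (Eventually.of_forall fun q => mem_image_of_mem _ (hdD q))
    refine tendsto_pi_nhds.2 fun i => tendsto_pi_nhds.2 fun γ => ?_
    by_cases hγ : γ ∈ A
    · rw [indicator_of_mem hγ, tendsto_iff_dist_tendsto_zero]
      have hlim : Tendsto (fun q : Finset Γ × ℕ => 1 / ((q.2 : ℝ) + 1)) atTop (𝓝 0) := by
        rw [← prod_atTop_atTop_eq]
        exact tendsto_one_div_add_atTop_nhds_zero_nat.comp tendsto_snd
      refine squeeze_zero' (Eventually.of_forall fun _ => dist_nonneg) ?_ hlim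
      filter_upwards [eventually_ge_atTop (({γ}, 0) : Finset Γ × ℕ)] with q hq
      rw [Real.dist_eq]
      exact (hd q i γ (by simpa [hγ] using hq.1)).le
    · rw [indicator_of_notMem hγ]
      simp only [hDA j _ (hdD _) i γ hγ]
      exact tendsto_const_nhds
  have hr : ∀ x : K, ∃ y, e y = A.indicator (e x) := by
    intro x
    have hx := hmem ⟨1, fun _ => (0, 0)⟩ (fun _ => x) <|
      countable_empty.mono fun f hf => by simpa using hf.2 0
    have hcl : IsClosed {z : Fin 1 → Γ → ℝ | z 0 ∈ range e} :=
      (isCompact_range he.continuous).isClosed.preimage (continuous_apply 0)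
    refine closure_minimal ?_ hcl hx
    rintro _ ⟨d, -, rfl⟩
    exact mem_range_self _
  choose r hr using hr
  have hrc : Continuous r := by
    rw [he.continuous_iff]
    refine continuous_pi fun γ => ?_
    by_cases hγ : γ ∈ A
    · simpa [Function.comp_def, hr, hγ] using (continuous_apply γ).comp he.continuous
    · simpa [Function.comp_def, hr, hγ] using continuous_const
  refine (countable_iUnion fun j => (hDc j).biUnion fun d hd => hDS j hd).mono fun g hg => ?_
  obtain ⟨V, hV, hVc⟩ := hF (g.comp ⟨r, hrc⟩)
  obtain ⟨j, x, hx, hjx⟩ : ∃ j x, (∀ i, g (r (x i)) ∈ Ioo ((j.2 i).1 : ℝ) (j.2 i).2) ∧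
      (box j x).Countable := by
    rw [nhds_pi, Filter.mem_pi] at hV
    obtain ⟨I, hI, t, ht, hIV⟩ := hV
    have hrat : ∀ y, ∃ q : ℚ × ℚ, g (r y) ∈ Ioo (q.1 : ℝ) q.2 ∧ Ioo (q.1 : ℝ) q.2 ⊆ t y := by
      intro y
      obtain ⟨u, hu, hyu, hut⟩ := Real.isTopologicalBasis_Ioo_rat.mem_nhds_iff.1 (ht y)
      simp only [mem_iUnion, mem_singleton_iff] at hu
      obtain ⟨a, b, -, rfl⟩ := hu
      exact ⟨(a, b), hyu, hut⟩
    choose q hq hqt using hrat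
    let φ := hI.toFinset.equivFin
    refine ⟨⟨hI.toFinset.card, fun i => q (φ.symm i)⟩, fun i => φ.symm i, fun i => hq _, ?_⟩
    refine Set.Countable.mono (fun f hf => ?_) hVc
    refine ⟨hf.1, hIV fun y hy => hqt y ?_⟩
    simpa using hf.2 (φ ⟨y, hI.mem_toFinset.2 hy⟩)
  have hcl : (fun i => r (x i)) ∈ closure (D j) := by
    have hemb : IsInducing fun (d : Fin j.1 → K) i => e (d i) :=
      (IsEmbedding.piMap fun _ : Fin j.1 => he).isInducing
    rw [hemb.closure_eq_preimage_closure_image]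
    simpa [hr] using hmem j x hjx
  have hopen : IsOpen {y : Fin j.1 → K | ∀ i, g (y i) ∈ Ioo ((j.2 i).1 : ℝ) (j.2 i).2} := by
    simp only [ofPred_forall]
    exact isOpen_iInter_of_finite fun i =>
      isOpen_Ioo.preimage (g.continuous.comp (continuous_apply i))
  obtain ⟨d, hd, hdD⟩ := mem_closure_iff.1 hcl _ hopen hx
  simp only [mem_iUnion]
  exact ⟨j, d, hdD, hg, hd⟩

/-- Every Corson compact space has the Bishop property (B): if `K` embeds
topologically into `Σ(Γ) ⊆ ℝ^Γ` (pointwise topology), i.e. there is a topological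
embedding `e : K → ℝ^Γ` such that every `e x` has countable support, then `K` has (B). -/
theorem stmt12 {K : Type*} [TopologicalSpace K] [CompactSpace K] [T2Space K]
    {Γ : Type*} (e : K → Γ → ℝ) (he : Topology.IsEmbedding e)
    (hsupp : ∀ x : K, {γ : Γ | e x γ ≠ 0}.Countable) : HasBishop K := by
  intro δ hδ F hF
  refine countable_of_forall_exists_nhds he hsupp fun h => ?_
  obtain ⟨V, hV, hfin⟩ := hF.exists_nhds_finite hδ h
  exact ⟨V, hV, hfin.countable⟩
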